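/- Let H be a (finite) graph and let ε > 0. Then there exists a constant c₁ = c₁(H, ε) > 0 such that every graph G on n vertices that does not contain H as an induced subgraph has the following property: there is a subset U of the vertex set of G with |U| ≥ c₁·n such that the induced subgraph G[U] has at most ε·binom(|U|,2) edges, or G[U] has at least (1 − ε)·binom(|U|,2) edges. -/

import Mathlib

/-- The graph `H` is contained in the graph `G` as an induced subgraph. -/
def ContainsInduced {a b : ℕ} (H : SimpleGraph (Fin a)) (G : SimpleGraph (Fin b)) : Prop :=
  ∃ φ : Fin a → Fin b, Function.Injective φ ∧ ∀ u v : Fin a, H.Adj u v ↔ G.Adj (φ u) (φ v)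

/-- The number of edges of the subgraph of `G` induced by `U`. -/
noncomputable def edgeCountIn {V : Type*} (G : SimpleGraph V) (U : Finset V) : ℕ :=
  {e : Sym2 V | e ∈ G.edgeSet ∧ ∀ v ∈ e, v ∈ U}.ncard

/-- Two-coloured relation of a graph: `true` is adjacency, `false` is non-adjacency. -/
def colRel {V : Type*} (G : SimpleGraph V) (t : Bool) (u v : V) : Prop :=
  u ≠ v ∧ (G.Adj u v ↔ t = true)

lemma colRel_symm {V : Type*} (G : SimpleGraph V) (t : Bool) (u v : V) :
    colRel G t u v ↔ colRel G t v u := by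
  unfold colRel
  rw [G.adj_comm, ne_comm]

open Classical in
/-- number of neighbours of colour `t` of `v` in `B` -/
noncomputable def cdeg {V : Type*} (G : SimpleGraph V) (t : Bool) (v : V) (B : Finset V) : ℕ :=
  ∑ w ∈ B, if colRel G t v w then 1 else 0

/-- number of ordered pairs of colour `t` -/
noncomputable def cpairs {V : Type*} (G : SimpleGraph V) (t : Bool) (A B : Finset V) : ℕ :=
  ∑ v ∈ A, cdeg G t v B

lemma cpairs_comm {V : Type*} (G : SimpleGraph V) (t : Bool) (A B : Finset V) :
    cpairs G t A B = cpairs G t B A := by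
  unfold cpairs cdeg
  rw [Finset.sum_comm]
  refine Finset.sum_congr rfl fun v _ => Finset.sum_congr rfl fun w _ => ?_
  classical
  exact if_congr (colRel_symm G t _ _) rfl rfl

lemma cdeg_le {V : Type*} (G : SimpleGraph V) (t : Bool) (v : V) (B : Finset V) :
    cdeg G t v B ≤ B.card := by
  classical
  unfold cdeg
  rw [Finset.sum_boole]
  simpa using Finset.card_filter_le _ _

lemma cpairs_le {V : Type*} (G : SimpleGraph V) (t : Bool) (A B : Finset V) :
    cpairs G t A B ≤ A.card * B.card := by
  unfold cpairs
  calc _ ≤ ∑ v ∈ A, B.card := Finset.sum_le_sum fun v _ => cdeg_le G t v B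
    _ = _ := by simp

lemma cpairs_union {V : Type*} [DecidableEq V] (G : SimpleGraph V) (t : Bool) (A B : Finset V)
    (h : Disjoint A B) :
    cpairs G t (A ∪ B) (A ∪ B) = cpairs G t A A + cpairs G t B B + 2 * cpairs G t A B := by
  have h1 : cpairs G t (A ∪ B) (A ∪ B)
      = cpairs G t A A + cpairs G t A B + (cpairs G t B A + cpairs G t B B) := by
    unfold cpairs cdeg
    rw [Finset.sum_union h]
    simp_rw [Finset.sum_union h, Finset.sum_add_distrib]
  rw [h1, cpairs_comm G t B A]
  ring

/-- Greedy embedding. -/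
lemma greedy {k : ℕ} (H : SimpleGraph (Fin k)) (q : ℕ) (S : Finset (Fin k)) :
    ∃ D : ℕ, 1 ≤ D ∧ ∀ (n : ℕ) (G : SimpleGraph (Fin n)) (L : ℕ) (W : Finset (Fin n))
      (C : Fin k → Finset (Fin n)), 1 ≤ L → (∀ i, C i ⊆ W) →
      (∀ i j, i ≠ j → Disjoint (C i) (C j)) → (∀ i ∈ S, D * L ≤ (C i).card) →
      (0 < n ∨ S.Nonempty) →
      (∃ φ : Fin k → Fin n, (∀ i ∈ S, φ i ∈ C i) ∧
        ∀ i ∈ S, ∀ j ∈ S, i ≠ j → φ i ≠ φ j ∧ (H.Adj i j ↔ G.Adj (φ i) (φ j))) ∨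
      (∃ t A B, A ⊆ W ∧ B ⊆ W ∧ Disjoint A B ∧ L ≤ A.card ∧ L ≤ B.card ∧
        ∀ v ∈ A, q * cdeg G t v B ≤ B.card) := by
  classical
  induction S using Finset.induction with
  | empty =>
    refine ⟨1, le_rfl, ?_⟩
    intro n G L W C hL hW hdis hC hn
    have hn' : 0 < n := by simpa using hn
    exact Or.inl ⟨fun _ => ⟨0, hn'⟩, by simp, by simp⟩
  | insert x S hx ih =>
    obtain ⟨D', hD', ih⟩ := ih
    refine ⟨q * D' + S.card + 1, by omega, ?_⟩
    intro n G L W C hL hW hdis hC _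
    let T : Fin k → Bool := fun i => decide (H.Adj x i)
    have hCx := hC x (Finset.mem_insert_self _ _)
    have hpos : 0 < (C x).card := lt_of_lt_of_le (by positivity) hCx
    obtain ⟨v0, hv0⟩ := Finset.card_pos.mp hpos
    have hn : 0 < n := v0.pos
    by_cases hgood : ∃ v ∈ C x, ∀ i ∈ S, (C i).card ≤ q * cdeg G (T i) v (C i)
    · obtain ⟨v, hv, hg⟩ := hgood
      rcases ih n G L W (fun i => (C i).filter (fun w => colRel G (T i) v w)) hL
        (fun i => (Finset.filter_subset _ _).trans (hW i))
        (fun i j hij => Finset.disjoint_filter_filter (hdis i j hij))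
        (by
          intro i hi
          have h1 := hg i hi
          have h2 := hC i (Finset.mem_insert_of_mem hi)
          have h3 : cdeg G (T i) v (C i)
              = ((C i).filter (fun w => colRel G (T i) v w)).card := by
            unfold cdeg; rw [Finset.sum_boole]; simp
          rw [← h3]
          by_contra hlt
          push Not at hlt
          have h4 : q * cdeg G (T i) v (C i) ≤ q * (D' * L) := Nat.mul_le_mul_left _ hlt.le
          nlinarith)
        (Or.inl hn) with h | h
      · left
        obtain ⟨φ, hφ, hadj⟩ := h
        have key : ∀ i ∈ S, v ≠ φ i ∧ (H.Adj x i ↔ G.Adj v (φ i)) := by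
          intro i hi
          have h1 := (Finset.mem_filter.mp (hφ i hi)).2
          refine ⟨h1.1, ?_⟩
          rw [h1.2]
          simp [T]
        have hne : ∀ i ∈ S, i ≠ x := fun i hi h => hx (h ▸ hi)
        refine ⟨Function.update φ x v, ?_, ?_⟩
        · intro i hi
          rcases Finset.mem_insert.mp hi with rfl | hi
          · simpa using hv
          · rw [Function.update_of_ne (hne i hi)]
            exact (Finset.mem_filter.mp (hφ i hi)).1
        · intro i hi j hj hij
          rcases Finset.mem_insert.mp hi with rfl | hi' <;>
          rcases Finset.mem_insert.mp hj with rfl | hj'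
          · exact absurd rfl hij
          · rw [Function.update_self, Function.update_of_ne (hne j hj')]
            exact key j hj'
          · rw [Function.update_self, Function.update_of_ne (hne i hi'), H.adj_comm, G.adj_comm]
            exact ⟨(key i hi').1.symm, (key i hi').2⟩
          · rw [Function.update_of_ne (hne i hi'), Function.update_of_ne (hne j hj')]
            exact hadj i hi' j hj' hij
      · exact Or.inr h
    · right
      push Not at hgood
      have hcov : C x ⊆ S.biUnion
          (fun i => (C x).filter (fun v => q * cdeg G (T i) v (C i) < (C i).card)) := by
        intro v hv
        obtain ⟨i, hi, hlt⟩ := hgood v hv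
        exact Finset.mem_biUnion.mpr ⟨i, hi, Finset.mem_filter.mpr ⟨hv, hlt⟩⟩
      have hex : ∃ i ∈ S, L ≤
          ((C x).filter (fun v => q * cdeg G (T i) v (C i) < (C i).card)).card := by
        by_contra hcon
        push Not at hcon
        have h1 := (Finset.card_le_card hcov).trans Finset.card_biUnion_le
        have h2 := h1.trans (Finset.sum_le_card_nsmul S _ L (fun i hi => (hcon i hi).le))
        rw [smul_eq_mul] at h2
        have h3 := hCx.trans h2
        have h4 : 0 ≤ q * D' * L := Nat.zero_le _
        nlinarith
      obtain ⟨i, hi, hL'⟩ := hex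
      refine ⟨T i, _, C i, (Finset.filter_subset _ _).trans (hW x), hW i, ?_, hL', ?_, ?_⟩
      · exact (hdis x i (fun h => hx (h ▸ hi))).mono_left (Finset.filter_subset _ _)
      · have := hC i (Finset.mem_insert_of_mem hi)
        have h4 : 0 ≤ (q * D' + S.card) * L := Nat.zero_le _
        nlinarith
      · intro v hv
        exact (Finset.mem_filter.mp hv).2.le

lemma pair_lemma {k : ℕ} (H : SimpleGraph (Fin k)) (q : ℕ) :
    ∃ D : ℕ, ∀ (n : ℕ) (G : SimpleGraph (Fin n)), ¬ ContainsInduced H G →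
      ∀ (L : ℕ) (W : Finset (Fin n)), 1 ≤ L → D * L ≤ W.card →
      ∃ t A B, A ⊆ W ∧ B ⊆ W ∧ Disjoint A B ∧ L ≤ A.card ∧ L ≤ B.card ∧
        ∀ v ∈ A, q * cdeg G t v B ≤ B.card := by
  classical
  obtain ⟨D, hD, h⟩ := greedy H q Finset.univ
  refine ⟨k * D, ?_⟩
  intro n G hG L W hL hW
  have hk : 0 < k := by
    by_contra hk
    obtain rfl : k = 0 := by omega
    exact hG ⟨fun i => i.elim0, fun i => i.elim0, fun i => i.elim0⟩
  obtain ⟨f⟩ : Nonempty (Fin k × Fin (D * L) ↪ W) := by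
    apply Function.Embedding.nonempty_of_card_le
    simpa [mul_assoc] using hW
  rcases h n G L W (fun i => Finset.univ.image (fun j => (f (i, j) : Fin n))) hL
    (by
      intro i v hv
      obtain ⟨j, -, rfl⟩ := Finset.mem_image.mp hv
      exact (f (i, j)).2)
    (by
      intro i j hij
      rw [Finset.disjoint_left]
      intro v hv hv'
      obtain ⟨a, -, rfl⟩ := Finset.mem_image.mp hv
      obtain ⟨b, -, hb⟩ := Finset.mem_image.mp hv'
      have := f.injective (Subtype.ext hb)
      exact hij (Prod.mk.inj this).1.symm)
    (by
      intro i _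
      rw [Finset.card_image_of_injective]
      · simp
      · intro a b hab
        have := f.injective (Subtype.ext hab)
        exact (Prod.mk.inj this).2)
    (Or.inr ⟨⟨0, hk⟩, Finset.mem_univ _⟩) with h | h
  · exfalso
    obtain ⟨φ, -, hφ⟩ := h
    refine hG ⟨φ, ?_, ?_⟩
    · intro i j hij
      by_contra hne
      exact (hφ i (Finset.mem_univ _) j (Finset.mem_univ _) hne).1 hij
    · intro i j
      by_cases hij : i = j
      · subst hij; simp
      · exact (hφ i (Finset.mem_univ _) j (Finset.mem_univ _) hij).2
  · exact h

/-- Discard the vertices of `B` with large degree into `A`. -/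
lemma half_lemma {n : ℕ} (G : SimpleGraph (Fin n)) (t : Bool) (q : ℕ) (A B : Finset (Fin n))
    (hA : 0 < A.card) (h : ∀ v ∈ A, q * cdeg G t v B ≤ B.card) :
    ∃ B₁ ⊆ B, B.card ≤ 2 * B₁.card ∧ ∀ w ∈ B₁, q * cdeg G t w A ≤ 2 * A.card := by
  classical
  refine ⟨B.filter (fun w => q * cdeg G t w A ≤ 2 * A.card), Finset.filter_subset _ _, ?_,
    fun w hw => (Finset.mem_filter.mp hw).2⟩
  have hsum := Finset.card_filter_add_card_filter_not (s := B)
    (fun w => q * cdeg G t w A ≤ 2 * A.card)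
  set X := B.filter (fun w => ¬ q * cdeg G t w A ≤ 2 * A.card) with hX
  have h1 : X.card * (2 * A.card) ≤ q * cpairs G t B A := by
    unfold cpairs
    rw [Finset.mul_sum]
    calc X.card * (2 * A.card) = ∑ w ∈ X, 2 * A.card := by simp
      _ ≤ ∑ w ∈ X, q * cdeg G t w A := Finset.sum_le_sum (fun w hw => by
          have := (Finset.mem_filter.mp hw).2
          omega)
      _ ≤ _ := Finset.sum_le_sum_of_subset (Finset.filter_subset _ _)
  have h2 : q * cpairs G t B A ≤ A.card * B.card := by
    rw [cpairs_comm]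
    unfold cpairs
    rw [Finset.mul_sum]
    calc _ ≤ ∑ v ∈ A, B.card := Finset.sum_le_sum h
      _ = _ := by simp
  have h3 : 2 * X.card ≤ B.card := by
    have : A.card * (2 * X.card) ≤ A.card * B.card := by linarith
    exact Nat.le_of_mul_le_mul_left this hA
  omega

/-- The density increment iteration. -/
lemma density_iteration {k : ℕ} (H : SimpleGraph (Fin k)) (q : ℕ) (hq : 0 < q) (s : ℕ) :
    ∀ a : Bool → ℕ, a true + a false = s →
    ∃ N : ℕ, ∀ (n : ℕ) (G : SimpleGraph (Fin n)), ¬ ContainsInduced H G →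
      ∀ (m : ℕ) (W : Finset (Fin n)), 1 ≤ m → N * m ≤ W.card →
      ∃ t, ∃ U ⊆ W, U.card = 2 ^ (a t) * m ∧
        (cpairs G t U U : ℝ) ≤ ((1 / 2) ^ (a t) + 2 / q) * (U.card : ℝ) ^ 2 := by
  classical
  induction s with
  | zero =>
    intro a ha
    refine ⟨1, ?_⟩
    intro n G _ m W _ hW
    obtain ⟨U, hU, hc⟩ := Finset.exists_subset_card_eq (show m ≤ W.card by omega)
    have h0 : a true = 0 := by omega
    refine ⟨true, U, hU, by simp [h0, hc], ?_⟩
    have h1 : (cpairs G true U U : ℝ) ≤ (U.card : ℝ) * U.card := by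
      exact_mod_cast cpairs_le G true U U
    rw [h0, pow_zero]
    have h2 : 0 ≤ (2 / q : ℝ) * (U.card : ℝ) ^ 2 := by positivity
    nlinarith
  | succ s ih =>
    intro a ha
    by_cases hz : ∃ t, a t = 0
    · obtain ⟨t, h0⟩ := hz
      refine ⟨1, ?_⟩
      intro n G _ m W _ hW
      obtain ⟨U, hU, hc⟩ := Finset.exists_subset_card_eq (show m ≤ W.card by omega)
      refine ⟨t, U, hU, by simp [h0, hc], ?_⟩
      have h1 : (cpairs G t U U : ℝ) ≤ (U.card : ℝ) * U.card := by
        exact_mod_cast cpairs_le G t U U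
      rw [h0, pow_zero]
      have h2 : 0 ≤ (2 / q : ℝ) * (U.card : ℝ) ^ 2 := by positivity
      nlinarith
    · push Not at hz
      have hex : ∀ t, ∃ N : ℕ, ∀ (n : ℕ) (G : SimpleGraph (Fin n)), ¬ ContainsInduced H G →
          ∀ (m : ℕ) (W : Finset (Fin n)), 1 ≤ m → N * m ≤ W.card →
          ∃ t', ∃ U ⊆ W, U.card = 2 ^ (Function.update a t (a t - 1) t') * m ∧
            (cpairs G t' U U : ℝ) ≤
              ((1 / 2) ^ (Function.update a t (a t - 1) t') + 2 / q) * (U.card : ℝ) ^ 2 := by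
        intro t
        apply ih
        have h1 := hz true
        have h2 := hz false
        cases t <;> simp <;> omega
      choose N hN using hex
      obtain ⟨D, hD⟩ := pair_lemma H q
      refine ⟨D * (2 * (N true + N false + 1)), ?_⟩
      intro n G hG m W hm hW
      obtain ⟨t, A, B, hAW, hBW, hAB, hA, hB, hdeg⟩ :=
        hD n G hG (2 * (N true + N false + 1) * m) W
          (by nlinarith [Nat.zero_le ((N true + N false) * m)])
          (by rw [← mul_assoc]; exact hW)
      have hNt : N t ≤ N true + N false + 1 := by cases t <;> omega
      have hNm : N t * m ≤ (N true + N false + 1) * m := Nat.mul_le_mul_right _ hNt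
      obtain ⟨t₁, U₁, hU₁, hc₁, hp₁⟩ := hN t n G hG m A hm (by nlinarith)
      by_cases ht₁ : t₁ = t
      swap
      · rw [Function.update_of_ne ht₁] at hc₁ hp₁
        exact ⟨t₁, U₁, hU₁.trans hAW, hc₁, hp₁⟩
      subst ht₁
      obtain ⟨B₁, hB₁, hB₁c, hB₁d⟩ := half_lemma G t₁ q U₁ B
        (by rw [hc₁]; positivity) (fun v hv => hdeg v (hU₁ hv))
      obtain ⟨t₂, U₂, hU₂, hc₂, hp₂⟩ := hN t₁ n G hG m B₁ hm (by nlinarith)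
      by_cases ht₂ : t₂ = t₁
      swap
      · rw [Function.update_of_ne ht₂] at hc₂ hp₂
        exact ⟨t₂, U₂, (hU₂.trans hB₁).trans hBW, hc₂, hp₂⟩
      subst ht₂
      rw [Function.update_self] at hc₁ hc₂ hp₁ hp₂
      have hdis : Disjoint U₁ U₂ := hAB.mono hU₁ (hU₂.trans hB₁)
      obtain ⟨b, hb⟩ : ∃ b, a t₂ = b + 1 := ⟨a t₂ - 1, by have := hz t₂; omega⟩
      rw [hb, Nat.add_sub_cancel] at hc₁ hc₂ hp₁ hp₂
      have hcard : (U₁ ∪ U₂).card = 2 * U₁.card := by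
        rw [Finset.card_union_of_disjoint hdis, hc₁, hc₂]; ring
      refine ⟨t₂, U₁ ∪ U₂, Finset.union_subset (hU₁.trans hAW) ((hU₂.trans hB₁).trans hBW),
        ?_, ?_⟩
      · rw [hcard, hb, hc₁]; ring
      · have hcross : q * cpairs G t₂ U₁ U₂ ≤ 2 * U₁.card * U₂.card := by
          rw [cpairs_comm]
          unfold cpairs
          rw [Finset.mul_sum]
          calc _ ≤ ∑ w ∈ U₂, 2 * U₁.card := Finset.sum_le_sum fun w hw => hB₁d w (hU₂ hw)
            _ = _ := by simp; ring
        have hcc : U₂.card = U₁.card := by rw [hc₁, hc₂]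
        rw [hcc] at hcross hp₂
        rw [cpairs_union G t₂ U₁ U₂ hdis, hcard, hb]
        push_cast
        have hqr : (0 : ℝ) < q := by exact_mod_cast hq
        have hcr : (cpairs G t₂ U₁ U₂ : ℝ) ≤ 2 / q * (U₁.card : ℝ) ^ 2 := by
          have : (q : ℝ) * cpairs G t₂ U₁ U₂ ≤ 2 * U₁.card * U₁.card := by exact_mod_cast hcross
          rw [div_mul_eq_mul_div, le_div_iff₀ hqr]
          nlinarith
        rw [pow_succ]
        nlinarith

lemma two_mul_edgeCountIn {n : ℕ} (G : SimpleGraph (Fin n)) (U : Finset (Fin n)) :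
    2 * edgeCountIn G U = cpairs G true U U := by
  classical
  let G' : SimpleGraph (Fin n) :=
    { Adj := fun u v => u ∈ U ∧ v ∈ U ∧ G.Adj u v
      symm := ⟨fun u v h => ⟨h.2.1, h.1, h.2.2.symm⟩⟩
      loopless := ⟨fun u h => G.loopless.irrefl u h.2.2⟩ }
  have h1 : {e : Sym2 (Fin n) | e ∈ G.edgeSet ∧ ∀ v ∈ e, v ∈ U} = (G'.edgeFinset : Set _) := by
    ext e
    induction e using Sym2.ind with
    | _ x y =>
      simp [G']
      tauto
  unfold edgeCountIn
  rw [h1, Set.ncard_coe_finset, ← G'.sum_degrees_eq_twice_card_edges]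
  unfold cpairs cdeg
  rw [← Finset.sum_subset (Finset.subset_univ U)]
  · apply Finset.sum_congr rfl
    intro v hv
    rw [Finset.sum_boole, ← G'.card_neighborFinset_eq_degree]
    simp only [Nat.cast_id]
    congr 1
    ext w
    simp only [SimpleGraph.mem_neighborFinset, Finset.mem_filter, colRel, G']
    constructor
    · rintro ⟨_, h2, h3⟩
      exact ⟨h2, h3.ne, by simp [h3]⟩
    · rintro ⟨h2, _, h3⟩
      exact ⟨hv, h2, by simpa using h3⟩
  · intro v _ hv
    rw [← G'.card_neighborFinset_eq_degree, Finset.card_eq_zero]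
    ext w
    simp [G', hv]

lemma cpairs_add {n : ℕ} (G : SimpleGraph (Fin n)) (U : Finset (Fin n)) :
    cpairs G true U U + cpairs G false U U + U.card = U.card * U.card := by
  classical
  unfold cpairs cdeg
  rw [← Finset.sum_add_distrib]
  have : ∀ v ∈ U, ((∑ w ∈ U, if colRel G true v w then 1 else 0)
      + ∑ w ∈ U, if colRel G false v w then 1 else 0) + 1 = U.card := by
    intro v hv
    have h1 : (∑ w ∈ U, if v = w then 1 else 0) = 1 := by simp [hv]
    rw [← h1, ← Finset.sum_add_distrib, ← Finset.sum_add_distrib, Finset.card_eq_sum_ones]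
    apply Finset.sum_congr rfl
    intro w _
    unfold colRel
    by_cases hvw : v = w
    · simp [hvw]
    · by_cases had : G.Adj v w <;> simp [hvw, had, hv]
  calc _ = ∑ v ∈ U, (((∑ w ∈ U, if colRel G true v w then 1 else 0)
      + ∑ w ∈ U, if colRel G false v w then 1 else 0) + 1) := by
        rw [Finset.sum_add_distrib (g := fun _ => 1)]; simp
    _ = ∑ v ∈ U, U.card := Finset.sum_congr rfl this
    _ = _ := by simp

/-- (Rödl) For every graph `H` and every `ε > 0` there is `c₁ > 0` such that every graph
`G` on `n` vertices with no induced copy of `H` has a subset `U` of at least `c₁·n`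
vertices inducing at most `ε·C(|U|,2)` or at least `(1−ε)·C(|U|,2)` edges. -/
theorem induced_Rodl (k : ℕ) (H : SimpleGraph (Fin k)) (ε : ℝ) (hε : 0 < ε) :
    ∃ c₁ : ℝ, 0 < c₁ ∧
      ∀ (n : ℕ) (G : SimpleGraph (Fin n)),
        ¬ ContainsInduced H G →
        ∃ U : Finset (Fin n), c₁ * n ≤ (U.card : ℝ) ∧
          ((edgeCountIn G U : ℝ) ≤ ε * (U.card.choose 2 : ℝ) ∨
            (1 - ε) * (U.card.choose 2 : ℝ) ≤ (edgeCountIn G U : ℝ)) := by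
  obtain ⟨a, ha⟩ := exists_pow_lt_of_lt_one (show 0 < ε / 4 by positivity)
    (show (1 / 2 : ℝ) < 1 by norm_num)
  obtain ⟨q, hq⟩ := exists_nat_gt (8 / ε)
  have hq0 : (0 : ℝ) < q := lt_trans (by positivity) hq
  have hq2 : 2 / (q : ℝ) ≤ ε / 4 := by
    rw [div_lt_iff₀ hε] at hq
    rw [div_le_iff₀ hq0]
    linarith
  obtain ⟨N, hN⟩ := density_iteration H q (by exact_mod_cast hq0) _ (fun _ => a) rfl
  have hNp : (0 : ℝ) < 2 * (N + 1) := by positivity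
  refine ⟨1 / (2 * (N + 1)), by positivity, ?_⟩
  intro n G hG
  -- every small set works
  have hsmall : ∀ U : Finset (Fin n), U.card ≤ 1 → edgeCountIn G U = 0 := by
    intro U hU
    have h1 := two_mul_edgeCountIn G U
    have h2 := cpairs_add G U
    have : U.card * U.card ≤ U.card := by nlinarith
    omega
  by_cases hn : n < N + 1
  · rcases Nat.eq_zero_or_pos n with rfl | hn0
    · exact ⟨∅, by simp, Or.inl (by rw [hsmall ∅ (by simp)]; simp)⟩
    · refine ⟨{⟨0, hn0⟩}, ?_, Or.inl (by rw [hsmall _ (by simp)]; simp)⟩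
      rw [Finset.card_singleton, one_div_mul_eq_div, div_le_iff₀ hNp]
      have : (n : ℝ) < N + 1 := by exact_mod_cast hn
      push_cast
      linarith
  · push Not at hn
    have hm : 1 ≤ n / (N + 1) := (Nat.one_le_div_iff (by omega)).mpr hn
    have hdm := Nat.div_add_mod n (N + 1)
    have hmod := Nat.mod_lt n (show N + 1 > 0 by omega)
    set m := n / (N + 1) with hmdef
    obtain ⟨t, U, -, hUc, hUp⟩ := hN n G hG m Finset.univ hm (by
      rw [Finset.card_univ, Fintype.card_fin]
      exact (Nat.mul_le_mul_right m (Nat.le_succ N)).trans (Nat.mul_div_le n (N + 1)))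
    have hUm : m ≤ U.card := by
      rw [hUc]; exact Nat.le_mul_of_pos_left _ (by positivity)
    refine ⟨U, ?_, ?_⟩
    · rw [one_div_mul_eq_div, div_le_iff₀ hNp]
      have h1 : n ≤ U.card * (2 * (N + 1)) := by nlinarith
      exact_mod_cast h1
    · by_cases hU1 : U.card ≤ 1
      · left
        rw [hsmall U hU1]
        push_cast
        positivity
      have hU2 : (2 : ℝ) ≤ U.card := by
        have : 2 ≤ U.card := by omega
        exact_mod_cast this
      have he : 2 * (edgeCountIn G U : ℝ) = cpairs G true U U := by
        exact_mod_cast two_mul_edgeCountIn G U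
      have hs : (cpairs G true U U : ℝ) + cpairs G false U U + U.card = U.card * U.card := by
        exact_mod_cast cpairs_add G U
      have hch : (U.card.choose 2 : ℝ) = U.card * (U.card - 1) / 2 := Nat.cast_choose_two ℝ _
      have hb : (cpairs G t U U : ℝ) ≤ ε * (U.card * (U.card - 1)) := by
        have h1 : (1 / 2 : ℝ) ^ a + 2 / q ≤ ε / 2 := by linarith
        have h2 : (cpairs G t U U : ℝ) ≤ ε / 2 * (U.card : ℝ) ^ 2 :=
          hUp.trans (mul_le_mul_of_nonneg_right h1 (by positivity))
        have h3 : (U.card : ℝ) ^ 2 / 2 ≤ U.card * (U.card - 1) := by nlinarith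
        have h4 := mul_le_mul_of_nonneg_left h3 hε.le
        linarith
      rw [hch]
      cases t
      · right
        nlinarith
      · left
        nlinarith
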